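/- arXiv:2407.20698 — 4 statements merged into one kernel-verified Lean document; each statement's English description precedes it below -/
import Mathlib

section
/- Fix an integer q with 1 ≤ q ≤ 6 and let δ_0, …, δ_q be the q-step BDF coefficients defined by Σ_{j=0}^q δ_j ζ^j = Σ_{l=1}^q (1/l)(1−ζ)^l. There exists a constant c > 0, depending only on q, with the following property: for every normed real vector space (H, ‖·‖), every τ > 0, every n ≥ q, and every sequence (a^k)_{k≥0} in H, defining ∂^τ a^k := (a^k − a^{k−1})/τ for k ≥ 1 and ∂^τ_q a^k := (1/τ) Σ_{j=0}^q δ_j a^{k−j} for k ≥ q, one has Σ_{k=q}^n ‖∂^τ a^k‖² ≤ c Σ_{k=q}^n ‖∂^τ_q a^k‖² + c Σ_{i=1}^{q−1} ‖∂^τ a^i‖². -/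
universe u

open Polynomial

/-- Right shift of sequences, with zero inserted at the start. -/
noncomputable def shiftT (H : Type u) [NormedAddCommGroup H] [NormedSpace ℝ H] :
    Module.End ℝ (ℕ → H) where
  toFun d k := if k = 0 then 0 else d (k - 1)
  map_add' x y := by
    funext k
    by_cases h : k = 0 <;> simp [h]
  map_smul' r x := by
    funext k
    by_cases h : k = 0 <;> simp [h]

section
variable {H : Type u} [NormedAddCommGroup H] [NormedSpace ℝ H]

/-- The truncated `ℓ²` norm of a sequence. -/
noncomputable def S (n : ℕ) (d : ℕ → H) : ℝ :=
  ‖(WithLp.toLp 2 (fun i : Fin n => d i) : PiLp 2 fun _ : Fin n => H)‖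

theorem S_nonneg (n : ℕ) (d : ℕ → H) : 0 ≤ S n d := norm_nonneg _

theorem S_sq (n : ℕ) (d : ℕ → H) : S n d ^ 2 = ∑ k ∈ Finset.range n, ‖d k‖ ^ 2 := by
  unfold S
  rw [PiLp.norm_sq_eq_of_L2, Finset.sum_range]

theorem S_add (n : ℕ) (d e : ℕ → H) : S n (d + e) ≤ S n d + S n e := by
  unfold S
  exact norm_add_le
    (WithLp.toLp 2 (fun i : Fin n => d i) : PiLp 2 fun _ : Fin n => H)
    (WithLp.toLp 2 (fun i : Fin n => e i))

theorem S_smul (n : ℕ) (r : ℝ) (d : ℕ → H) : S n (r • d) = |r| * S n d := by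
  unfold S
  exact norm_smul r (WithLp.toLp 2 (fun i : Fin n => d i) : PiLp 2 fun _ : Fin n => H)

theorem S_shift (n : ℕ) (d : ℕ → H) : S n (shiftT H d) ≤ S n d := by
  refine (sq_le_sq₀ (S_nonneg n _) (S_nonneg n d)).1 ?_
  rw [S_sq, S_sq]
  cases n with
  | zero => simp
  | succ n =>
    rw [Finset.sum_range_succ', Finset.sum_range_succ]
    simp [shiftT]

theorem S_shift_pow (n j : ℕ) (d : ℕ → H) : S n ((shiftT H ^ j) d) ≤ S n d := by
  induction j with
  | zero => simp
  | succ j ih =>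
    rw [pow_succ', Module.End.mul_apply]
    exact (S_shift n _).trans ih

theorem shift_pow_apply (j k : ℕ) (d : ℕ → H) :
    (shiftT H ^ j) d k = if k < j then 0 else d (k - j) := by
  induction j generalizing k with
  | zero => simp
  | succ j ih =>
    rw [pow_succ', Module.End.mul_apply]
    simp only [shiftT, LinearMap.coe_mk, AddHom.coe_mk]
    by_cases h : k = 0
    · simp [h]
    · rw [if_neg h]
      have := ih (k - 1)
      simp only [shiftT] at this
      rw [this]
      by_cases h2 : k < j + 1
      · rw [if_pos h2, if_pos (by omega)]
      · rw [if_neg h2, if_neg (by omega)]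
        congr 1
        omega

end

theorem bounded (p : ℝ[X]) : ∃ C : ℝ, 0 ≤ C ∧
    ∀ (H : Type u) [NormedAddCommGroup H] [NormedSpace ℝ H] (n : ℕ) (d : ℕ → H),
      S n (aeval (shiftT H) p d) ≤ C * S n d := by
  induction p using Polynomial.induction_on' with
  | add p q hp hq =>
    obtain ⟨C, hC, h⟩ := hp
    obtain ⟨D, hD, h'⟩ := hq
    refine ⟨C + D, by positivity, fun H _ _ n d => ?_⟩
    rw [map_add, LinearMap.add_apply, add_mul]
    exact (S_add _ _ _).trans (add_le_add (h H n d) (h' H n d))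
  | monomial j r =>
    refine ⟨|r|, abs_nonneg _, fun H _ _ n d => ?_⟩
    rw [aeval_monomial, Module.End.mul_apply, Module.algebraMap_end_apply, S_smul]
    exact mul_le_mul_of_nonneg_left (S_shift_pow n j d) (abs_nonneg _)

/-- `ℓ²` stability of the recursion with characteristic polynomial `p`. -/
def Stable (p : ℝ[X]) : Prop := ∃ C : ℝ, 0 ≤ C ∧
    ∀ (H : Type u) [NormedAddCommGroup H] [NormedSpace ℝ H] (n : ℕ) (d : ℕ → H),
      S n d ≤ C * S n (aeval (shiftT H) p d)

theorem Stable.of_mul (p : ℝ[X]) {q : ℝ[X]} (h : Stable.{u} (p * q)) : Stable.{u} q := by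
  obtain ⟨C, hC, h⟩ := h
  obtain ⟨D, hD, h'⟩ := bounded.{u} p
  refine ⟨C * D, by positivity, fun H _ _ n d => (h H n d).trans ?_⟩
  rw [map_mul, Module.End.mul_apply, mul_assoc]
  exact mul_le_mul_of_nonneg_left (h' H n _) hC

/-- A polynomial of degree five in `X ^ m`. -/
noncomputable def poly6 (m : ℕ) (a0 a1 a2 a3 a4 a5 : ℝ) : ℝ[X] :=
  C a0 + C a1 * X ^ m + C a2 * X ^ (m * 2) + C a3 * X ^ (m * 3) + C a4 * X ^ (m * 4)
    + C a5 * X ^ (m * 5)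

theorem dominant {m : ℕ} {a0 a1 a2 a3 a4 a5 : ℝ}
    (h : |a1| + |a2| + |a3| + |a4| + |a5| < |a0|) : Stable.{u} (poly6 m a0 a1 a2 a3 a4 a5) := by
  have hpos : 0 < |a0| - (|a1| + |a2| + |a3| + |a4| + |a5|) := by linarith
  refine ⟨(|a0| - (|a1| + |a2| + |a3| + |a4| + |a5|))⁻¹, by positivity, fun H _ _ n d => ?_⟩
  rw [inv_mul_eq_div, le_div_iff₀ hpos]
  set e := aeval (shiftT H) (poly6 m a0 a1 a2 a3 a4 a5) d with he
  have key : a0 • d = e + ((-a1) • (shiftT H ^ m) d + ((-a2) • (shiftT H ^ (m * 2)) d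
      + ((-a3) • (shiftT H ^ (m * 3)) d + ((-a4) • (shiftT H ^ (m * 4)) d
      + (-a5) • (shiftT H ^ (m * 5)) d)))) := by
    rw [he]
    simp only [poly6, map_add, map_mul, aeval_C, map_pow, aeval_X, LinearMap.add_apply,
      Module.End.mul_apply, Module.algebraMap_end_apply]
    module
  have t : ∀ (r : ℝ) (j : ℕ), S n ((-r) • (shiftT H ^ j) d) ≤ |r| * S n d := by
    intro r j
    rw [S_smul, abs_neg]
    exact mul_le_mul_of_nonneg_left (S_shift_pow n j d) (abs_nonneg _)
  have h0 : |a0| * S n d = S n (a0 • d) := (S_smul _ _ _).symm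
  rw [key] at h0
  have h1 := t a1 m
  have h2 := t a2 (m * 2)
  have h3 := t a3 (m * 3)
  have h4 := t a4 (m * 4)
  have h5 := t a5 (m * 5)
  have s1 := S_add n e ((-a1) • (shiftT H ^ m) d + ((-a2) • (shiftT H ^ (m * 2)) d
      + ((-a3) • (shiftT H ^ (m * 3)) d + ((-a4) • (shiftT H ^ (m * 4)) d
      + (-a5) • (shiftT H ^ (m * 5)) d))))
  have s2 := S_add n ((-a1) • (shiftT H ^ m) d) ((-a2) • (shiftT H ^ (m * 2)) d
      + ((-a3) • (shiftT H ^ (m * 3)) d + ((-a4) • (shiftT H ^ (m * 4)) d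
      + (-a5) • (shiftT H ^ (m * 5)) d)))
  have s3 := S_add n ((-a2) • (shiftT H ^ (m * 2)) d)
      ((-a3) • (shiftT H ^ (m * 3)) d + ((-a4) • (shiftT H ^ (m * 4)) d
      + (-a5) • (shiftT H ^ (m * 5)) d))
  have s4 := S_add n ((-a3) • (shiftT H ^ (m * 3)) d) ((-a4) • (shiftT H ^ (m * 4)) d
      + (-a5) • (shiftT H ^ (m * 5)) d)
  have s5 := S_add n ((-a4) • (shiftT H ^ (m * 4)) d) ((-a5) • (shiftT H ^ (m * 5)) d)
  nlinarith

/-- One step of the Dandelin-Graeffe root squaring process. -/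
theorem graeffe {m : ℕ} {a0 a1 a2 a3 a4 a5 b0 b1 b2 b3 b4 b5 : ℝ}
    (h0 : a0 ^ 2 = b0) (h1 : 2 * a0 * a2 - a1 ^ 2 = b1)
    (h2 : a2 ^ 2 + 2 * a0 * a4 - 2 * a1 * a3 = b2)
    (h3 : 2 * a2 * a4 - a3 ^ 2 - 2 * a1 * a5 = b3)
    (h4 : a4 ^ 2 - 2 * a3 * a5 = b4) (h5 : - a5 ^ 2 = b5)
    (h : Stable.{u} (poly6 (m * 2) b0 b1 b2 b3 b4 b5)) :
    Stable.{u} (poly6 m a0 a1 a2 a3 a4 a5) := by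
  apply Stable.of_mul (poly6 m a0 (-a1) a2 (-a3) a4 (-a5))
  convert h using 1
  subst h0 h1 h2 h3 h4 h5
  unfold poly6
  apply Polynomial.funext
  intro x
  simp only [eval_add, eval_mul, eval_C, eval_pow, eval_X]
  ring

/-- The quotient of the BDF generating polynomial by `1 - X`. -/
noncomputable def bmu (q : ℕ) : ℝ[X] :=
  ∑ l ∈ Finset.range q, C (1 / ((l : ℝ) + 1)) * (1 - X) ^ l

theorem stab_mu1 : Stable.{u} (bmu 1) := by
  apply Stable.of_mul (C (60:ℝ))
  have h : C (60:ℝ) * bmu 1 = poly6 1 60 0 0 0 0 0 := by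
    unfold bmu poly6
    apply Polynomial.funext
    intro x
    simp [Finset.sum_range_succ]
    try ring
  rw [h]
  exact dominant (by norm_num [abs_of_pos, abs_of_neg])

theorem stab_mu2 : Stable.{u} (bmu 2) := by
  apply Stable.of_mul (C (60:ℝ))
  have h : C (60:ℝ) * bmu 2 = poly6 1 90 (-30) 0 0 0 0 := by
    unfold bmu poly6
    apply Polynomial.funext
    intro x
    simp [Finset.sum_range_succ]
    try ring
  rw [h]
  exact dominant (by norm_num [abs_of_pos, abs_of_neg])

theorem stab_mu3 : Stable.{u} (bmu 3) := by
  apply Stable.of_mul (C (60:ℝ))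
  have h : C (60:ℝ) * bmu 3 = poly6 1 110 (-70) 20 0 0 0 := by
    unfold bmu poly6
    apply Polynomial.funext
    intro x
    simp [Finset.sum_range_succ]
    try ring
  rw [h]
  exact dominant (by norm_num [abs_of_pos, abs_of_neg])

theorem stab_mu4 : Stable.{u} (bmu 4) := by
  apply Stable.of_mul (C (60:ℝ))
  have h : C (60:ℝ) * bmu 4 = poly6 1 125 (-115) 65 (-15) 0 0 := by
    unfold bmu poly6
    apply Polynomial.funext
    intro x
    simp [Finset.sum_range_succ]
    try ring
  rw [h]
  refine graeffe (m := 1) (b0 := 15625) (b1 := 3025)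
    (b2 := 775) (b3 := -225) (b4 := 0)
    (b5 := 0) (by norm_num) (by norm_num) (by norm_num) (by norm_num)
    (by norm_num) (by norm_num) ?_
  exact dominant (by norm_num [abs_of_pos, abs_of_neg])

theorem stab_mu5 : Stable.{u} (bmu 5) := by
  apply Stable.of_mul (C (60:ℝ))
  have h : C (60:ℝ) * bmu 5 = poly6 1 137 (-163) 137 (-63) 12 0 := by
    unfold bmu poly6
    apply Polynomial.funext
    intro x
    simp [Finset.sum_range_succ]
    try ring
  rw [h]
  refine graeffe (m := 1) (b0 := 18769) (b1 := 10969)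
    (b2 := 1519) (b3 := -681) (b4 := 144)
    (b5 := 0) (by norm_num) (by norm_num) (by norm_num) (by norm_num)
    (by norm_num) (by norm_num) ?_
  exact dominant (by norm_num [abs_of_pos, abs_of_neg])

theorem stab_mu6 : Stable.{u} (bmu 6) := by
  apply Stable.of_mul (C (60:ℝ))
  have h : C (60:ℝ) * bmu 6 = poly6 1 147 (-213) 237 (-163) 62 (-10) := by
    unfold bmu poly6
    apply Polynomial.funext
    intro x
    simp [Finset.sum_range_succ]
    try ring
  rw [h]
  refine graeffe (m := 1) (b0 := 21609) (b1 := 24309)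
    (b2 := 4959) (b3 := -1441) (b4 := 584)
    (b5 := -100) (by norm_num) (by norm_num) (by norm_num) (by norm_num)
    (by norm_num) (by norm_num) ?_
  refine graeffe (m := 2) (b0 := 466948881) (b1 := -376609419)
    (b2 := 119889531) (b3 := 8577431) (b4 := 52856)
    (b5 := -10000) (by norm_num) (by norm_num) (by norm_num) (by norm_num)
    (by norm_num) (by norm_num) ?_
  refine graeffe (m := 4) (b0 := 218041257467152161) (b1 := -29870089791387939)
    (b2 := 20883544354353411) (b3 := -68430748838689) (b4 := 174342376736)
    (b5 := -100000000) (by norm_num) (by norm_num) (by norm_num) (by norm_num)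
    (by norm_num) (by norm_num) ?_
  exact dominant (by norm_num [abs_of_pos, abs_of_neg])

theorem stab_mu (q : ℕ) (hq1 : 1 ≤ q) (hq6 : q ≤ 6) : Stable.{u} (bmu q) := by
  interval_cases q
  · exact stab_mu1
  · exact stab_mu2
  · exact stab_mu3
  · exact stab_mu4
  · exact stab_mu5
  · exact stab_mu6

theorem bdf_factor (q : ℕ) (δ : ℕ → ℝ)
    (hδ : ∀ ζ : ℝ, ∑ j ∈ Finset.range (q + 1), δ j * ζ ^ j
        = ∑ l ∈ Finset.Icc 1 q, (1 / (l : ℝ)) * (1 - ζ) ^ l) :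
    ∑ j ∈ Finset.range (q + 1), monomial j (δ j) = bmu q * (1 - X) := by
  apply Polynomial.funext
  intro x
  simp only [eval_finsetSum, eval_monomial, bmu, eval_mul, eval_sub, eval_one, eval_X,
    eval_pow, eval_C]
  rw [hδ, Finset.sum_mul]
  rw [show Finset.Icc 1 q = Finset.Ico 1 (q + 1) from rfl, Finset.sum_Ico_eq_sum_range]
  apply Finset.sum_congr (by simp)
  intro l _
  push_cast
  rw [pow_add, add_comm (1 : ℝ)]
  ring

theorem core (q : ℕ) (hq1 : 1 ≤ q) (δ : ℕ → ℝ) (hs : Stable.{u} (bmu q))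
    (hδ : ∀ ζ : ℝ, ∑ j ∈ Finset.range (q + 1), δ j * ζ ^ j
        = ∑ l ∈ Finset.Icc 1 q, (1 / (l : ℝ)) * (1 - ζ) ^ l) :
    ∃ c : ℝ, 0 < c ∧
      ∀ (H : Type u) [NormedAddCommGroup H] [NormedSpace ℝ H],
      ∀ n : ℕ, q ≤ n → ∀ a : ℕ → H,
        ∑ k ∈ Finset.Icc q n, ‖a k - a (k - 1)‖ ^ 2
          ≤ c * ∑ k ∈ Finset.Icc q n, ‖∑ j ∈ Finset.range (q + 1), δ j • a (k - j)‖ ^ 2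
            + c * ∑ i ∈ Finset.Icc 1 (q - 1), ‖a i - a (i - 1)‖ ^ 2 := by
  obtain ⟨A, hA, hs⟩ := hs
  obtain ⟨B, hB, hb⟩ := bounded.{u} (bmu q)
  refine ⟨A ^ 2 * (1 + B ^ 2) + 1, by positivity, fun H _ _ n hn a => ?_⟩
  have hsum0 : ∑ j ∈ Finset.range (q + 1), δ j = 0 := by
    have := hδ 1
    simp only [one_pow, mul_one, sub_self] at this
    rw [this]
    apply Finset.sum_eq_zero
    intro l hl
    rw [Finset.mem_Icc] at hl
    rw [zero_pow (by omega), mul_zero]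
  set d : ℕ → H := fun k => a k - a (k - 1) with hd
  set b : ℕ → H := fun k => a k - a 0 with hbdef
  have hdb : d = aeval (shiftT H) (1 - X : ℝ[X]) b := by
    funext k
    simp only [map_sub, map_one, aeval_X, LinearMap.sub_apply, Module.End.one_apply,
      Pi.sub_apply, hd, hbdef, shiftT, LinearMap.coe_mk, AddHom.coe_mk]
    by_cases h : k = 0
    · simp [h]
    · simp [h]
  set f := aeval (shiftT H) (bmu q) d with hf
  have hfk : ∀ k, q ≤ k → f k = ∑ j ∈ Finset.range (q + 1), δ j • a (k - j) := by
    intro k hk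
    rw [hf, hdb, ← Module.End.mul_apply, ← map_mul, ← bdf_factor q δ hδ, map_sum,
      LinearMap.sum_apply, Finset.sum_apply]
    have : ∀ j ∈ Finset.range (q + 1), (aeval (shiftT H) (monomial j (δ j)) b) k
        = δ j • a (k - j) - δ j • a 0 := by
      intro j hj
      rw [Finset.mem_range] at hj
      rw [aeval_monomial, Module.End.mul_apply, Module.algebraMap_end_apply, Pi.smul_apply,
        shift_pow_apply, if_neg (by omega), hbdef, smul_sub]
    rw [Finset.sum_congr rfl this, Finset.sum_sub_distrib, ← Finset.sum_smul, hsum0, zero_smul,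
      sub_zero]
  have split : ∀ g : ℕ → ℝ, ∑ k ∈ Finset.range (n + 1), g k
      = ∑ k ∈ Finset.range q, g k + ∑ k ∈ Finset.Icc q n, g k := by
    intro g
    rw [← Finset.sum_range_add_sum_Ico g (show q ≤ n + 1 by omega)]
    rfl
  have hq : ∑ k ∈ Finset.range q, ‖d k‖ ^ 2 = ∑ i ∈ Finset.Icc 1 (q - 1), ‖d i‖ ^ 2 := by
    obtain ⟨r, rfl⟩ : ∃ r, q = r + 1 := ⟨q - 1, by omega⟩
    rw [Finset.range_eq_Ico, Finset.sum_eq_sum_Ico_succ_bot (by omega)]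
    simp only [hd]
    simp
    rfl
  have e1 := pow_le_pow_left₀ (S_nonneg _ _) (hs H (n + 1) d) 2
  have e2 := pow_le_pow_left₀ (S_nonneg _ _) (hb H q d) 2
  rw [← hf] at e1 e2
  rw [mul_pow, S_sq, S_sq, split, split, hq] at e1
  rw [mul_pow, S_sq, S_sq, hq] at e2
  have e3 : ∑ k ∈ Finset.Icc q n, ‖f k‖ ^ 2
      = ∑ k ∈ Finset.Icc q n, ‖∑ j ∈ Finset.range (q + 1), δ j • a (k - j)‖ ^ 2 := by
    apply Finset.sum_congr rfl
    intro k hk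
    rw [hfk k (Finset.mem_Icc.1 hk).1]
  rw [e3] at e1
  set F := ∑ k ∈ Finset.Icc q n, ‖∑ j ∈ Finset.range (q + 1), δ j • a (k - j)‖ ^ 2
  have hF : 0 ≤ F := Finset.sum_nonneg fun _ _ => by positivity
  have hI : 0 ≤ ∑ i ∈ Finset.Icc 1 (q - 1), ‖d i‖ ^ 2 := Finset.sum_nonneg fun _ _ => by positivity
  change ∑ k ∈ Finset.Icc q n, ‖d k‖ ^ 2 ≤ _ * F + _ * ∑ i ∈ Finset.Icc 1 (q - 1), ‖d i‖ ^ 2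
  have e4 := mul_le_mul_of_nonneg_left e2 (sq_nonneg A)
  have g1 : 0 ≤ A ^ 2 * B ^ 2 * F := by positivity
  have g2 := mul_nonneg (sq_nonneg A) hI
  nlinarith

/-- **Zero-stability bound for BDF methods (`q ≤ 6`).**
With `δ_0, …, δ_q` the `q`-step BDF coefficients (`Σ_j δ_j ζ^j = Σ_{l=1}^q (1/l)(1−ζ)^l`),
there is a constant `c > 0` depending only on `q` such that for every normed real vector
space `H`, every `τ > 0`, every `n ≥ q` and every sequence `(a^k)` in `H`,
`Σ_{k=q}^n ‖∂^τ a^k‖² ≤ c Σ_{k=q}^n ‖∂^τ_q a^k‖² + c Σ_{i=1}^{q−1} ‖∂^τ a^i‖²`,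
where `∂^τ a^k = (a^k − a^{k−1})/τ` and `∂^τ_q a^k = (1/τ) Σ_{j=0}^q δ_j a^{k−j}`. -/
theorem bdf_zero_stability_partial_bound
    (q : ℕ) (hq1 : 1 ≤ q) (hq6 : q ≤ 6) (δ : ℕ → ℝ)
    (hδ : ∀ ζ : ℝ, ∑ j ∈ Finset.range (q + 1), δ j * ζ ^ j
        = ∑ l ∈ Finset.Icc 1 q, (1 / (l : ℝ)) * (1 - ζ) ^ l) :
    ∃ c : ℝ, 0 < c ∧
      ∀ (H : Type*) [NormedAddCommGroup H] [NormedSpace ℝ H],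
      ∀ τ : ℝ, 0 < τ → ∀ n : ℕ, q ≤ n → ∀ a : ℕ → H,
        ∑ k ∈ Finset.Icc q n, ‖τ⁻¹ • (a k - a (k - 1))‖ ^ 2
          ≤ c * ∑ k ∈ Finset.Icc q n,
                ‖τ⁻¹ • ∑ j ∈ Finset.range (q + 1), δ j • a (k - j)‖ ^ 2
            + c * ∑ i ∈ Finset.Icc 1 (q - 1), ‖τ⁻¹ • (a i - a (i - 1))‖ ^ 2 := by
  obtain ⟨c, hc, h⟩ := core q hq1 δ (stab_mu q hq1 hq6) hδ
  refine ⟨c, hc, fun H _ _ τ hτ n hn a => ?_⟩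
  have := h H n hn a
  simp only [norm_smul, mul_pow, ← Finset.mul_sum]
  have ht : 0 ≤ ‖τ⁻¹‖ ^ 2 := by positivity
  have h2 := mul_le_mul_of_nonneg_left this ht
  linarith
end

section
/- Fix an integer q with 1 ≤ q ≤ 5 and let δ_0, …, δ_q be the q-step BDF coefficients defined by Σ_{j=0}^q δ_j ζ^j = Σ_{l=1}^q (1/l)(1−ζ)^l. Let 1 ≤ p ≤ q, let T > 0, τ > 0, and let y : [0,T] → ℝ be (p+1) times continuously differentiable. Then for every t* ∈ [qτ, T]: (1/τ) Σ_{i=0}^q δ_i y(t* − iτ) − y′(t*) = τ^p ∫_0^q K_q(s) y^{(p+1)}(t* − sτ) ds, where K_q(s) = −(1/p!) Σ_{i=0}^q δ_i ((s−i)_−)^p and (x)_− equals x for x ≤ 0 and 0 for x ≥ 0. -/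
lemma bdf_taylor_ftc (p : ℕ) (T : ℝ) (hT : 0 < T) (y : ℝ → ℝ)
    (hy : ContDiffOn ℝ (p + 1) y (Set.Icc 0 T)) (x t : ℝ) (hx : 0 ≤ x) (hxt : x ≤ t) (ht : t ≤ T) :
    ∫ u in x..t, ((Nat.factorial p : ℝ)⁻¹ * (x - u) ^ p)
        * iteratedDerivWithin (p + 1) y (Set.Icc 0 T) u
      = taylorWithinEval y p (Set.Icc 0 T) t x - y x := by
  have hS : UniqueDiffOn ℝ (Set.Icc 0 T) := uniqueDiffOn_Icc hT
  have hsub : Set.Icc x t ⊆ Set.Icc 0 T := Set.Icc_subset_Icc hx ht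
  have hyp : ContDiffOn ℝ p y (Set.Icc 0 T) := hy.of_le (by exact_mod_cast Nat.le_succ p)
  have hd : DifferentiableOn ℝ (iteratedDerivWithin p y (Set.Icc 0 T)) (Set.Icc 0 T) :=
    hy.differentiableOn_iteratedDerivWithin (by exact_mod_cast Nat.lt_succ_self p) hS
  have hc : ContinuousOn (iteratedDerivWithin (p + 1) y (Set.Icc 0 T)) (Set.Icc 0 T) :=
    hy.continuousOn_iteratedDerivWithin (by exact_mod_cast le_refl (p + 1)) hS
  have := intervalIntegral.integral_eq_sub_of_hasDerivAt_of_le (a := x) (b := t)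
    (f := fun u => taylorWithinEval y p (Set.Icc 0 T) u x)
    (f' := fun u => ((Nat.factorial p : ℝ)⁻¹ * (x - u) ^ p)
        * iteratedDerivWithin (p + 1) y (Set.Icc 0 T) u) hxt
    ((continuousOn_taylorWithinEval hS hyp).mono hsub)
    (fun u hu => by
      have := taylorWithinEval_hasDerivAt_Ioo x hT (t := u) (n := p)
        (Set.Ioo_subset_Ioo hx ht hu) hyp (hd.mono Set.Ioo_subset_Icc_self)
      simpa only [smul_eq_mul] using this)
    (by
      apply ContinuousOn.intervalIntegrable
      rw [Set.uIcc_of_le hxt]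
      exact ContinuousOn.mul (by fun_prop) (hc.mono hsub))
  rw [this, taylorWithinEval_self]

lemma bdf_kernel_continuousOn (p q : ℕ) (T τ : ℝ) (hT : 0 < T) (hτ : 0 < τ) (y : ℝ → ℝ)
    (hy : ContDiffOn ℝ (p + 1) y (Set.Icc 0 T)) (t : ℝ) (ht : t ∈ Set.Icc ((q : ℝ) * τ) T)
    (i : ℕ) :
    ContinuousOn (fun s : ℝ => (min (s - (i : ℝ)) 0) ^ p
      * iteratedDerivWithin (p + 1) y (Set.Icc 0 T) (t - s * τ)) (Set.Icc (0 : ℝ) q) := by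
  have hc : ContinuousOn (iteratedDerivWithin (p + 1) y (Set.Icc 0 T)) (Set.Icc 0 T) :=
    hy.continuousOn_iteratedDerivWithin (by exact_mod_cast le_refl (p + 1)) (uniqueDiffOn_Icc hT)
  refine ContinuousOn.mul (by fun_prop) (hc.comp (by fun_prop) ?_)
  intro s hs
  have h1 : s * τ ≤ q * τ := mul_le_mul_of_nonneg_right hs.2 hτ.le
  have h2 : 0 ≤ s * τ := mul_nonneg hs.1 hτ.le
  exact ⟨by linarith [ht.1], by linarith [ht.2]⟩

lemma bdf_kernel_single (p q : ℕ) (hp1 : 1 ≤ p) (T τ : ℝ) (hT : 0 < T) (hτ : 0 < τ) (y : ℝ → ℝ)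
    (hy : ContDiffOn ℝ (p + 1) y (Set.Icc 0 T)) (t : ℝ) (ht : t ∈ Set.Icc ((q : ℝ) * τ) T)
    (i : ℕ) (hi : i ≤ q) :
    τ ^ (p + 1) * ((Nat.factorial p : ℝ)⁻¹ * ∫ s in (0 : ℝ)..(q : ℝ), (min (s - (i : ℝ)) 0) ^ p
        * iteratedDerivWithin (p + 1) y (Set.Icc 0 T) (t - s * τ))
      = taylorWithinEval y p (Set.Icc 0 T) t (t - i * τ) - y (t - i * τ) := by
  have hi' : (i : ℝ) ≤ q := by exact_mod_cast hi
  have hi0 : (0 : ℝ) ≤ i := Nat.cast_nonneg i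
  have hcont := bdf_kernel_continuousOn p q T τ hT hτ y hy t ht i
  have h1 : (i : ℝ) * τ ≤ q * τ := mul_le_mul_of_nonneg_right hi' hτ.le
  have h2 : 0 ≤ (i : ℝ) * τ := mul_nonneg hi0 hτ.le
  rw [← bdf_taylor_ftc p T hT y hy (t - i * τ) t (by linarith [ht.1]) (by linarith) ht.2]
  rw [← intervalIntegral.integral_add_adjacent_intervals (b := (i : ℝ))
    (ContinuousOn.intervalIntegrable (by
      rw [Set.uIcc_of_le hi0]; exact hcont.mono (Set.Icc_subset_Icc le_rfl hi')))
    (ContinuousOn.intervalIntegrable (by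
      rw [Set.uIcc_of_le hi']; exact hcont.mono (Set.Icc_subset_Icc hi0 le_rfl)))]
  have hz : ∫ s in (i : ℝ)..(q : ℝ), (min (s - (i : ℝ)) 0) ^ p
        * iteratedDerivWithin (p + 1) y (Set.Icc 0 T) (t - s * τ) = 0 := by
    refine (intervalIntegral.integral_congr (g := fun _ => (0 : ℝ)) ?_).trans
      intervalIntegral.integral_zero
    intro s hs
    rw [Set.uIcc_of_le hi'] at hs
    have : min (s - (i : ℝ)) 0 = 0 := min_eq_right (by linarith [hs.1])
    simp only [this]
    rw [zero_pow (by omega), zero_mul]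
  rw [hz, add_zero]
  have hsubst := intervalIntegral.integral_comp_sub_mul (a := 0) (b := (i : ℝ))
    (fun u => ((Nat.factorial p : ℝ)⁻¹ * ((t - i * τ) - u) ^ p)
        * iteratedDerivWithin (p + 1) y (Set.Icc 0 T) u) hτ.ne' t
  rw [mul_zero, sub_zero, mul_comm τ (i : ℝ), smul_eq_mul, eq_inv_mul_iff_mul_eq₀ hτ.ne'] at hsubst
  rw [← hsubst, pow_succ', mul_assoc, ← intervalIntegral.integral_const_mul,
    ← intervalIntegral.integral_const_mul]
  congr 1
  apply intervalIntegral.integral_congr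
  intro s hs
  rw [Set.uIcc_of_le hi0] at hs
  have : min (s - (i : ℝ)) 0 = s - i := min_eq_left (by linarith [hs.2])
  simp only [this]
  have e : t - i * τ - (t - τ * s) = τ * (s - i) := by ring
  rw [e, mul_pow, mul_comm s τ]
  ring

lemma bdf_moments (q : ℕ) (hq1 : 1 ≤ q) (hq5 : q ≤ 5) (δ : ℕ → ℝ)
    (hδ : ∀ ζ : ℝ, ∑ j ∈ Finset.range (q + 1), δ j * ζ ^ j
        = ∑ l ∈ Finset.Icc 1 q, (1 / (l : ℝ)) * (1 - ζ) ^ l) (k : ℕ) (hk : k ≤ q) :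
    ∑ i ∈ Finset.range (q + 1), δ i * (i : ℝ) ^ k = if k = 1 then -1 else 0 := by
  have a0 := hδ 0
  have a1 := hδ 1
  have a2 := hδ (-1)
  have a3 := hδ 2
  have a4 := hδ (-2)
  have a5 := hδ 3
  clear hδ
  interval_cases q <;>
  simp only [Finset.sum_range_succ, Finset.range_zero, Finset.sum_empty,
    Finset.sum_Icc_succ_top, Nat.reduceLeDiff, Nat.reduceAdd, le_refl,
    Finset.Icc_self, Finset.sum_singleton] at a0 a1 a2 a3 a4 a5 ⊢ <;>
  norm_num [Finset.sum_Icc_succ_top] at a0 a1 a2 a3 a4 a5 <;>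
  interval_cases k <;> norm_num <;> linarith

/-- **Peano kernel representation of the BDF consistency error.**
With `δ_0, …, δ_q` the `q`-step BDF coefficients (`1 ≤ q ≤ 5`), `1 ≤ p ≤ q`, `T, τ > 0`,
and `y : [0,T] → ℝ` being `(p+1)` times continuously differentiable, for every
`t* ∈ [qτ, T]`:
`(1/τ) Σ_{i=0}^q δ_i y(t* − iτ) − y′(t*) = τ^p ∫_0^q K_q(s) y^{(p+1)}(t* − sτ) ds`,
where `K_q(s) = −(1/p!) Σ_{i=0}^q δ_i ((s−i)_−)^p` and `(x)_− = min x 0`. -/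
theorem bdf_peano_kernel_derivative
    (q p : ℕ) (hq1 : 1 ≤ q) (hq5 : q ≤ 5) (hp1 : 1 ≤ p) (hpq : p ≤ q)
    (δ : ℕ → ℝ)
    (hδ : ∀ ζ : ℝ, ∑ j ∈ Finset.range (q + 1), δ j * ζ ^ j
        = ∑ l ∈ Finset.Icc 1 q, (1 / (l : ℝ)) * (1 - ζ) ^ l)
    (T τ : ℝ) (hT : 0 < T) (hτ : 0 < τ)
    (y : ℝ → ℝ) (hy : ContDiffOn ℝ (p + 1) y (Set.Icc 0 T))
    (tstar : ℝ) (htstar : tstar ∈ Set.Icc ((q : ℝ) * τ) T) :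
    (1 / τ) * (∑ i ∈ Finset.range (q + 1), δ i * y (tstar - (i : ℝ) * τ))
        - derivWithin y (Set.Icc 0 T) tstar
      = τ ^ p * ∫ s in (0 : ℝ)..(q : ℝ),
          (-(1 / (Nat.factorial p : ℝ))
              * ∑ i ∈ Finset.range (q + 1), δ i * (min (s - (i : ℝ)) 0) ^ p)
            * iteratedDerivWithin (p + 1) y (Set.Icc 0 T) (tstar - s * τ) := by
  have hfac : (Nat.factorial p : ℝ) ≠ 0 := by positivity
  have hq0 : (0 : ℝ) ≤ q := Nat.cast_nonneg q
  have hint : ∫ s in (0 : ℝ)..(q : ℝ),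
          (-(1 / (Nat.factorial p : ℝ))
              * ∑ i ∈ Finset.range (q + 1), δ i * (min (s - (i : ℝ)) 0) ^ p)
            * iteratedDerivWithin (p + 1) y (Set.Icc 0 T) (tstar - s * τ)
      = ∑ i ∈ Finset.range (q + 1), (-(Nat.factorial p : ℝ)⁻¹ * δ i) *
          ∫ s in (0 : ℝ)..(q : ℝ), (min (s - (i : ℝ)) 0) ^ p
            * iteratedDerivWithin (p + 1) y (Set.Icc 0 T) (tstar - s * τ) := by
    simp_rw [← intervalIntegral.integral_const_mul]
    rw [← intervalIntegral.integral_finsetSum]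
    · congr 1
      ext s
      rw [Finset.mul_sum, Finset.sum_mul]
      refine Finset.sum_congr rfl fun i _ => ?_
      ring
    · intro i _
      apply IntervalIntegrable.const_mul
      apply ContinuousOn.intervalIntegrable
      rw [Set.uIcc_of_le hq0]
      exact bdf_kernel_continuousOn p q T τ hT hτ y hy tstar htstar i
  have hR : τ * (τ ^ p * ∑ i ∈ Finset.range (q + 1), (-(Nat.factorial p : ℝ)⁻¹ * δ i) *
          ∫ s in (0 : ℝ)..(q : ℝ), (min (s - (i : ℝ)) 0) ^ p
            * iteratedDerivWithin (p + 1) y (Set.Icc 0 T) (tstar - s * τ))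
      = ∑ i ∈ Finset.range (q + 1), δ i * y (tstar - i * τ)
        - ∑ i ∈ Finset.range (q + 1), δ i *
          taylorWithinEval y p (Set.Icc 0 T) tstar (tstar - i * τ) := by
    rw [← Finset.sum_sub_distrib, Finset.mul_sum, Finset.mul_sum]
    refine Finset.sum_congr rfl fun i hi => ?_
    have := bdf_kernel_single p q hp1 T τ hT hτ y hy tstar htstar i
      (by have := Finset.mem_range.1 hi; omega)
    rw [← mul_sub, ← neg_sub (taylorWithinEval y p (Set.Icc 0 T) tstar (tstar - i * τ)), ← this]
    ring
  have hM : ∑ i ∈ Finset.range (q + 1), δ i *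
          taylorWithinEval y p (Set.Icc 0 T) tstar (tstar - i * τ)
      = τ * derivWithin y (Set.Icc 0 T) tstar := by
    simp_rw [taylor_within_apply, Finset.mul_sum]
    rw [Finset.sum_comm]
    have : ∀ k ∈ Finset.range (p + 1), ∑ i ∈ Finset.range (q + 1), δ i *
        (((Nat.factorial k : ℝ)⁻¹ * (tstar - i * τ - tstar) ^ k) •
          iteratedDerivWithin k y (Set.Icc 0 T) tstar)
        = if k = 1 then τ * derivWithin y (Set.Icc 0 T) tstar else 0 := by
      intro k hk
      have hk' := bdf_moments q hq1 hq5 δ hδ k (by have := Finset.mem_range.1 hk; omega)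
      have e : ∑ i ∈ Finset.range (q + 1), δ i *
        (((Nat.factorial k : ℝ)⁻¹ * (tstar - i * τ - tstar) ^ k) •
          iteratedDerivWithin k y (Set.Icc 0 T) tstar)
        = ((Nat.factorial k : ℝ)⁻¹ * (-τ) ^ k * iteratedDerivWithin k y (Set.Icc 0 T) tstar)
          * ∑ i ∈ Finset.range (q + 1), δ i * (i : ℝ) ^ k := by
        rw [Finset.mul_sum]
        refine Finset.sum_congr rfl fun i _ => ?_
        have e1 : tstar - i * τ - tstar = (-τ) * i := by ring
        rw [e1, mul_pow, smul_eq_mul]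
        ring
      rw [e, hk']
      split_ifs with h
      · subst h
        simp [iteratedDerivWithin_one]
      · simp
    rw [Finset.sum_congr rfl this, Finset.sum_ite_eq' (Finset.range (p + 1)) 1,
      if_pos (Finset.mem_range.2 (by omega))]
  rw [hint]
  rw [hM] at hR
  apply mul_left_cancel₀ hτ.ne'
  rw [hR, mul_sub, ← mul_assoc, mul_one_div_cancel hτ.ne', one_mul]
end

section
/- Let N ≥ 1, let M ∈ ℝ^{N×N} be symmetric positive definite, let A ∈ ℝ^{N×N} be symmetric, and let c > 0, τ > 0. Then the 2N × 2N block matrix [[c·M, τ·A], [−τ·A, τ·M]] is invertible; equivalently, for every right-hand side (b_1, b_2) ∈ ℝ^N × ℝ^N the linear system c·M u + τ·A w = b_1, −τ·A u + τ·M w = b_2 has a unique solution (u, w). -/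
open Matrix in
/-- The homogeneous system has only the trivial solution (energy argument). -/
lemma bdf_step_homogeneous {N : ℕ} {M A : Matrix (Fin N) (Fin N) ℝ}
    (hMpos : M.PosDef) (hAsymm : A.IsSymm) {c τ : ℝ} (hc : 0 < c) (hτ : 0 < τ)
    (u w : Fin N → ℝ) (h1 : c • M.mulVec u + τ • A.mulVec w = 0)
    (h2 : -(τ • A.mulVec u) + τ • M.mulVec w = 0) : u = 0 ∧ w = 0 := by
  have e1 := congrArg (fun v => u ⬝ᵥ v) h1
  have e2 := congrArg (fun v => w ⬝ᵥ v) h2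
  have hs : w ⬝ᵥ (A *ᵥ u) = u ⬝ᵥ (A *ᵥ w) := by
    rw [dotProduct_mulVec, ← mulVec_transpose, hAsymm.eq, dotProduct_comm]
  simp only [dotProduct_add, dotProduct_neg, dotProduct_smul, dotProduct_zero, smul_eq_mul,
    hs] at e1 e2
  have pos : ∀ x : Fin N → ℝ, x ≠ 0 → 0 < x ⬝ᵥ (M *ᵥ x) := fun x hx => by
    simpa using hMpos.dotProduct_mulVec_pos hx
  have nn : ∀ x : Fin N → ℝ, 0 ≤ x ⬝ᵥ (M *ᵥ x) := fun x => by
    simpa using hMpos.posSemidef.dotProduct_mulVec_nonneg x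
  have a1 := mul_nonneg hc.le (nn u)
  have a2 := mul_nonneg hτ.le (nn w)
  constructor
  · by_contra hu
    have := mul_pos hc (pos u hu)
    linarith
  · by_contra hw
    have := mul_pos hτ (pos w hw)
    linarith


/-- **Well-posedness of one time step of the linearly implicit BDF scheme.**
Let `M ∈ ℝ^{N×N}` be symmetric positive definite, `A ∈ ℝ^{N×N}` symmetric, and `c, τ > 0`.
Then the block matrix `[[c·M, τ·A], [−τ·A, τ·M]]` is invertible; equivalently, for every
right-hand side `(b₁, b₂)` the linear system `c·M u + τ·A w = b₁`, `−τ·A u + τ·M w = b₂`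
has a unique solution `(u, w)`. -/
theorem bdf_step_well_posed
    (N : ℕ) (hN : 1 ≤ N) (M A : Matrix (Fin N) (Fin N) ℝ)
    (hMsymm : M.IsSymm) (hMpos : M.PosDef) (hAsymm : A.IsSymm)
    (c τ : ℝ) (hc : 0 < c) (hτ : 0 < τ) :
    IsUnit (Matrix.fromBlocks (c • M) (τ • A) (-(τ • A)) (τ • M)) ∧
    ∀ b₁ b₂ : Fin N → ℝ, ∃! uw : (Fin N → ℝ) × (Fin N → ℝ),
      c • M.mulVec uw.1 + τ • A.mulVec uw.2 = b₁ ∧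
      -(τ • A.mulVec uw.1) + τ • M.mulVec uw.2 = b₂ := by
  have key : IsUnit (Matrix.fromBlocks (c • M) (τ • A) (-(τ • A)) (τ • M)) := by
    rw [← Matrix.mulVec_injective_iff_isUnit]
    rw [← Matrix.coe_mulVecLin, ← LinearMap.ker_eq_bot, LinearMap.ker_eq_bot']
    intro x hx
    rw [Matrix.mulVecLin_apply, Matrix.fromBlocks_mulVec] at hx
    obtain ⟨h1, h2⟩ := bdf_step_homogeneous hMpos hAsymm hc hτ (x ∘ Sum.inl) (x ∘ Sum.inr)
      (by
        funext i
        simpa [Matrix.smul_mulVec, Matrix.neg_mulVec] using congrFun hx (Sum.inl i))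
      (by
        funext i
        simpa [Matrix.smul_mulVec, Matrix.neg_mulVec] using congrFun hx (Sum.inr i))
    funext i
    rcases i with i | i
    · exact congrFun h1 i
    · exact congrFun h2 i
  refine ⟨key, fun b₁ b₂ => ?_⟩
  obtain ⟨x, hx⟩ := Matrix.mulVec_surjective_iff_isUnit.mpr key (Sum.elim b₁ b₂)
  rw [Matrix.fromBlocks_mulVec] at hx
  have hx1 : c • M.mulVec (x ∘ Sum.inl) + τ • A.mulVec (x ∘ Sum.inr) = b₁ := by
    funext i
    simpa [Matrix.smul_mulVec, Matrix.neg_mulVec] using congrFun hx (Sum.inl i)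
  have hx2 : -(τ • A.mulVec (x ∘ Sum.inl)) + τ • M.mulVec (x ∘ Sum.inr) = b₂ := by
    funext i
    simpa [Matrix.smul_mulVec, Matrix.neg_mulVec] using congrFun hx (Sum.inr i)
  refine ⟨(x ∘ Sum.inl, x ∘ Sum.inr), ⟨hx1, hx2⟩, ?_⟩
  rintro ⟨u, w⟩ ⟨hu, hw⟩
  dsimp only at hu hw
  obtain ⟨h1, h2⟩ := bdf_step_homogeneous hMpos hAsymm hc hτ (u - x ∘ Sum.inl) (w - x ∘ Sum.inr)
    (by
      rw [Matrix.mulVec_sub, Matrix.mulVec_sub, smul_sub, smul_sub, sub_add_sub_comm, hu, hx1,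
        sub_self])
    (by
      have h := sub_eq_zero.mpr (hw.trans hx2.symm)
      rw [Matrix.mulVec_sub, Matrix.mulVec_sub, smul_sub, smul_sub, ← h]
      abel)
  exact Prod.ext (sub_eq_zero.mp h1) (sub_eq_zero.mp h2)
end

section
/- Fix an integer q with 1 ≤ q ≤ 5 and let δ_0, …, δ_q be the q-step BDF coefficients defined by Σ_{j=0}^q δ_j ζ^j = Σ_{l=1}^q (1/l)(1−ζ)^l. Then there exist a real number η with 0 ≤ η < 1 and a symmetric positive definite matrix G = (g_{ij}) ∈ ℝ^{q×q} such that for every real vector space H equipped with a semi-inner product (·,·) and all w_0, …, w_q ∈ H: (Σ_{i=0}^q δ_i w_{q−i}, w_q − η w_{q−1}) ≥ Σ_{i,j=1}^q g_{ij} (w_i, w_j) − Σ_{i,j=1}^q g_{ij} (w_{i−1}, w_{j−1}). -/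
/-- A quadratic form bounded below by a positive multiple of the Euclidean one is positive definite. -/
theorem bdf_posDef_aux {n : ℕ} (G : Matrix (Fin n) (Fin n) ℝ) (hG : G.IsSymm)
    (h : ∀ x : Fin n → ℝ, (1 / 100 : ℝ) * ∑ i, x i ^ 2 ≤ ∑ i, ∑ j, x i * G i j * x j) :
    G.PosDef := by
  refine Matrix.PosDef.of_dotProduct_mulVec_pos ?_ ?_
  · rw [Matrix.IsHermitian, Matrix.conjTranspose_eq_transpose_of_trivial]; exact hG
  · intro x hx
    have h1 : 0 < ∑ i, x i ^ 2 := by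
      obtain ⟨i, hi⟩ := Function.ne_iff.mp hx
      have hi' : x i ≠ 0 := hi
      exact Finset.sum_pos' (fun j _ => sq_nonneg (x j)) ⟨i, Finset.mem_univ i, by positivity⟩
    have h2 := h x
    have h3 : star x ⬝ᵥ G.mulVec x = ∑ i, ∑ j, x i * G i j * x j := by
      simp [dotProduct, Matrix.mulVec, Finset.mul_sum, mul_assoc]
    rw [h3]
    linarith

theorem bdf_energy_case1 (δ : ℕ → ℝ)
    (hδ : ∀ ζ : ℝ, ∑ j ∈ Finset.range (1 + 1), δ j * ζ ^ j
        = ∑ l ∈ Finset.Icc 1 (1 : ℕ), (1 / (l : ℝ)) * (1 - ζ) ^ l) :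
    ∃ η : ℝ, 0 ≤ η ∧ η < 1 ∧
    ∃ G : Matrix (Fin 1) (Fin 1) ℝ, G.IsSymm ∧ G.PosDef ∧
      ∀ (H : Type*) [AddCommGroup H] [Module ℝ H],
      ∀ B : H → H → ℝ,
        (∀ x y, B x y = B y x) →
        (∀ x y z, B (x + y) z = B x z + B y z) →
        (∀ (c : ℝ) (x y), B (c • x) y = c * B x y) →
        (∀ x, 0 ≤ B x x) →
        ∀ w : ℕ → H,
          (∑ a : Fin 1, ∑ b : Fin 1, G a b * B (w ((a : ℕ) + 1)) (w ((b : ℕ) + 1)))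
            - (∑ a : Fin 1, ∑ b : Fin 1, G a b * B (w (a : ℕ)) (w (b : ℕ)))
          ≤ B (∑ i ∈ Finset.range (1 + 1), δ i • w (1 - i)) (w 1 - η • w (1 - 1)) := by
  have e0 := hδ (0)
  have e1 := hδ (1)
  norm_num [Finset.sum_range_succ, Finset.sum_Icc_succ_top] at e0 e1
  have d0 : δ 0 = 1 := by linarith
  have d1 : δ 1 = -1 := by linarith
  have hS : (!![1/2] : Matrix (Fin 1) (Fin 1) ℝ).IsSymm := by
    ext i j; fin_cases i <;> fin_cases j <;> rfl
  refine ⟨0, by norm_num, by norm_num, _, hS, bdf_posDef_aux _ hS ?_, ?_⟩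
  · intro x
    simp
    linear_combination (49/100) * sq_nonneg (1 * x 0)
  · intro H _ _ B hs ha hm hp w
    have ha' : ∀ x y z, B x (y + z) = B x y + B x z := fun x y z => by
      rw [hs, ha, hs y, hs z]
    have hm' : ∀ (c : ℝ) (x y), B x (c • y) = c * B x y := fun c x y => by
      rw [hs, hm, hs y]
    have hb' : ∀ x y z, B x (y - z) = B x y - B x z := fun x y z => by
      rw [sub_eq_add_neg, ← neg_one_smul ℝ z, ha', hm']; ring
    have p0 := hp ((-1 : ℝ) • w 0 + (1 : ℝ) • w 1)
    simp only [ha, hm, ha', hm'] at p0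
    simp only [hs (w 1) (w 0)] at p0
    simp [Finset.sum_range_succ, ha, hm, ha', hm', hb']
    simp only [hs (w 1) (w 0), d0, d1]
    linear_combination (1/2) * p0

theorem bdf_energy_case2 (δ : ℕ → ℝ)
    (hδ : ∀ ζ : ℝ, ∑ j ∈ Finset.range (2 + 1), δ j * ζ ^ j
        = ∑ l ∈ Finset.Icc 1 (2 : ℕ), (1 / (l : ℝ)) * (1 - ζ) ^ l) :
    ∃ η : ℝ, 0 ≤ η ∧ η < 1 ∧
    ∃ G : Matrix (Fin 2) (Fin 2) ℝ, G.IsSymm ∧ G.PosDef ∧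
      ∀ (H : Type*) [AddCommGroup H] [Module ℝ H],
      ∀ B : H → H → ℝ,
        (∀ x y, B x y = B y x) →
        (∀ x y z, B (x + y) z = B x z + B y z) →
        (∀ (c : ℝ) (x y), B (c • x) y = c * B x y) →
        (∀ x, 0 ≤ B x x) →
        ∀ w : ℕ → H,
          (∑ a : Fin 2, ∑ b : Fin 2, G a b * B (w ((a : ℕ) + 1)) (w ((b : ℕ) + 1)))
            - (∑ a : Fin 2, ∑ b : Fin 2, G a b * B (w (a : ℕ)) (w (b : ℕ)))
          ≤ B (∑ i ∈ Finset.range (2 + 1), δ i • w (2 - i)) (w 2 - η • w (2 - 1)) := by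
  have e0 := hδ (0)
  have e1 := hδ (1)
  have e2 := hδ (-1)
  norm_num [Finset.sum_range_succ, Finset.sum_Icc_succ_top] at e0 e1 e2
  have d0 : δ 0 = 3/2 := by linarith
  have d1 : δ 1 = -2 := by linarith
  have d2 : δ 2 = 1/2 := by linarith
  have hS : (!![5/8, -3/4; -3/4, 9/8] : Matrix (Fin 2) (Fin 2) ℝ).IsSymm := by
    ext i j; fin_cases i <;> fin_cases j <;> rfl
  refine ⟨1/2, by norm_num, by norm_num, _, hS, bdf_posDef_aux _ hS ?_, ?_⟩
  · intro x
    simp [Fin.sum_univ_two]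
    linear_combination (123/200) * sq_nonneg (1 * x 0 + (-50/41) * x 1)
      + (1643/8200) * sq_nonneg (1 * x 1)
  · intro H _ _ B hs ha hm hp w
    have ha' : ∀ x y z, B x (y + z) = B x y + B x z := fun x y z => by
      rw [hs, ha, hs y, hs z]
    have hm' : ∀ (c : ℝ) (x y), B x (c • y) = c * B x y := fun c x y => by
      rw [hs, hm, hs y]
    have hb' : ∀ x y z, B x (y - z) = B x y - B x z := fun x y z => by
      rw [sub_eq_add_neg, ← neg_one_smul ℝ z, ha', hm']; ring
    have p0 := hp ((-1 : ℝ) • w 0 + (7/5 : ℝ) • w 1 + (-2/5 : ℝ) • w 2)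
    have p1 := hp ((-1 : ℝ) • w 1 + (1 : ℝ) • w 2)
    simp only [ha, hm, ha', hm'] at p0 p1
    simp only [hs (w 1) (w 0), hs (w 2) (w 0), hs (w 2) (w 1)] at p0 p1
    simp [Finset.sum_range_succ, Fin.sum_univ_two, ha, hm, ha', hm', hb']
    simp only [hs (w 1) (w 0), hs (w 2) (w 0), hs (w 2) (w 1), d0, d1, d2]
    linear_combination (5/8) * p0 + (11/40) * p1

theorem bdf_energy_case3 (δ : ℕ → ℝ)
    (hδ : ∀ ζ : ℝ, ∑ j ∈ Finset.range (3 + 1), δ j * ζ ^ j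
        = ∑ l ∈ Finset.Icc 1 (3 : ℕ), (1 / (l : ℝ)) * (1 - ζ) ^ l) :
    ∃ η : ℝ, 0 ≤ η ∧ η < 1 ∧
    ∃ G : Matrix (Fin 3) (Fin 3) ℝ, G.IsSymm ∧ G.PosDef ∧
      ∀ (H : Type*) [AddCommGroup H] [Module ℝ H],
      ∀ B : H → H → ℝ,
        (∀ x y, B x y = B y x) →
        (∀ x y z, B (x + y) z = B x z + B y z) →
        (∀ (c : ℝ) (x y), B (c • x) y = c * B x y) →
        (∀ x, 0 ≤ B x x) →
        ∀ w : ℕ → H,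
          (∑ a : Fin 3, ∑ b : Fin 3, G a b * B (w ((a : ℕ) + 1)) (w ((b : ℕ) + 1)))
            - (∑ a : Fin 3, ∑ b : Fin 3, G a b * B (w (a : ℕ)) (w (b : ℕ)))
          ≤ B (∑ i ∈ Finset.range (3 + 1), δ i • w (3 - i)) (w 3 - η • w (3 - 1)) := by
  have e0 := hδ (0)
  have e1 := hδ (1)
  have e2 := hδ (-1)
  have e3 := hδ (2)
  norm_num [Finset.sum_range_succ, Finset.sum_Icc_succ_top] at e0 e1 e2 e3
  have d0 : δ 0 = 11/6 := by linarith
  have d1 : δ 1 = -3 := by linarith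
  have d2 : δ 2 = 3/2 := by linarith
  have d3 : δ 3 = -1/3 := by linarith
  have hS : (!![1/2, -5/6, 5/12; -5/6, 17/8, -19/12; 5/12, -19/12, 13/8] : Matrix (Fin 3) (Fin 3) ℝ).IsSymm := by
    ext i j; fin_cases i <;> fin_cases j <;> rfl
  refine ⟨1/2, by norm_num, by norm_num, _, hS, bdf_posDef_aux _ hS ?_, ?_⟩
  · intro x
    simp [Fin.sum_univ_three]
    linear_combination (49/100) * sq_nonneg (1 * x 0 + (-250/147) * x 1 + (125/147) * x 2)
      + (61543/88200) * sq_nonneg (1 * x 1 + (-77150/61543) * x 2)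
      + (6061417/36925800) * sq_nonneg (1 * x 2)
  · intro H _ _ B hs ha hm hp w
    have ha' : ∀ x y z, B x (y + z) = B x y + B x z := fun x y z => by
      rw [hs, ha, hs y, hs z]
    have hm' : ∀ (c : ℝ) (x y), B x (c • y) = c * B x y := fun c x y => by
      rw [hs, hm, hs y]
    have hb' : ∀ x y z, B x (y - z) = B x y - B x z := fun x y z => by
      rw [sub_eq_add_neg, ← neg_one_smul ℝ z, ha', hm']; ring
    have p0 := hp ((-1 : ℝ) • w 0 + (5/3 : ℝ) • w 1 + (-1 : ℝ) • w 2 + (1/3 : ℝ) • w 3)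
    have p1 := hp ((-1 : ℝ) • w 1 + (21/17 : ℝ) • w 2 + (-4/17 : ℝ) • w 3)
    have p2 := hp ((-1 : ℝ) • w 2 + (1 : ℝ) • w 3)
    simp only [ha, hm, ha', hm'] at p0 p1 p2
    simp only [hs (w 1) (w 0), hs (w 2) (w 0), hs (w 2) (w 1), hs (w 3) (w 0), hs (w 3) (w 1), hs (w 3) (w 2)] at p0 p1 p2
    simp [Finset.sum_range_succ, Fin.sum_univ_three, ha, hm, ha', hm', hb']
    simp only [hs (w 1) (w 0), hs (w 2) (w 0), hs (w 2) (w 1), hs (w 3) (w 0), hs (w 3) (w 1), hs (w 3) (w 2), d0, d1, d2, d3]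
    linear_combination (1/2) * p0 + (17/72) * p1 + (19/136) * p2

theorem bdf_energy_case4 (δ : ℕ → ℝ)
    (hδ : ∀ ζ : ℝ, ∑ j ∈ Finset.range (4 + 1), δ j * ζ ^ j
        = ∑ l ∈ Finset.Icc 1 (4 : ℕ), (1 / (l : ℝ)) * (1 - ζ) ^ l) :
    ∃ η : ℝ, 0 ≤ η ∧ η < 1 ∧
    ∃ G : Matrix (Fin 4) (Fin 4) ℝ, G.IsSymm ∧ G.PosDef ∧
      ∀ (H : Type*) [AddCommGroup H] [Module ℝ H],
      ∀ B : H → H → ℝ,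
        (∀ x y, B x y = B y x) →
        (∀ x y z, B (x + y) z = B x z + B y z) →
        (∀ (c : ℝ) (x y), B (c • x) y = c * B x y) →
        (∀ x, 0 ≤ B x x) →
        ∀ w : ℕ → H,
          (∑ a : Fin 4, ∑ b : Fin 4, G a b * B (w ((a : ℕ) + 1)) (w ((b : ℕ) + 1)))
            - (∑ a : Fin 4, ∑ b : Fin 4, G a b * B (w (a : ℕ)) (w (b : ℕ)))
          ≤ B (∑ i ∈ Finset.range (4 + 1), δ i • w (4 - i)) (w 4 - η • w (4 - 1)) := by
  have e0 := hδ (0)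
  have e1 := hδ (1)
  have e2 := hδ (-1)
  have e3 := hδ (2)
  have e4 := hδ (-2)
  norm_num [Finset.sum_range_succ, Finset.sum_Icc_succ_top] at e0 e1 e2 e3 e4
  have d0 : δ 0 = 25/12 := by linarith
  have d1 : δ 1 = -4 := by linarith
  have d2 : δ 2 = 3 := by linarith
  have d3 : δ 3 = -4/3 := by linarith
  have d4 : δ 4 = 1/4 := by linarith
  have hS : (!![23/48, -13/16, 17/24, -7/16; -13/16, 47/24, -13/6, 31/24; 17/24, -13/6, 53/16, -7/3; -7/16, 31/24, -7/3, 2] : Matrix (Fin 4) (Fin 4) ℝ).IsSymm := by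
    ext i j; fin_cases i <;> fin_cases j <;> rfl
  refine ⟨1/2, by norm_num, by norm_num, _, hS, bdf_posDef_aux _ hS ?_, ?_⟩
  · intro x
    simp [Fin.sum_univ_four]
    linear_combination (563/1200) * sq_nonneg (1 * x 0 + (-975/563) * x 1 + (850/563) * x 2 + (-525/563) * x 3)
      + (365669/675600) * sq_nonneg (1 * x 1 + (-635050/365669) * x 2 + (360775/365669) * x 3)
      + (87853749/146267600) * sq_nonneg (1 * x 2 + (-109029400/87853749) * x 3)
      + (2285787727/17570749800) * sq_nonneg (1 * x 3)
  · intro H _ _ B hs ha hm hp w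
    have ha' : ∀ x y z, B x (y + z) = B x y + B x z := fun x y z => by
      rw [hs, ha, hs y, hs z]
    have hm' : ∀ (c : ℝ) (x y), B x (c • y) = c * B x y := fun c x y => by
      rw [hs, hm, hs y]
    have hb' : ∀ x y z, B x (y - z) = B x y - B x z := fun x y z => by
      rw [sub_eq_add_neg, ← neg_one_smul ℝ z, ha', hm']; ring
    have p0 := hp ((-1 : ℝ) • w 0 + (39/23 : ℝ) • w 1 + (-34/23 : ℝ) • w 2 + (24/23 : ℝ) • w 3 + (-6/23 : ℝ) • w 4)
    have p1 := hp ((-1 : ℝ) • w 1 + (169/112 : ℝ) • w 2 + (-19/28 : ℝ) • w 3 + (19/112 : ℝ) • w 4)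
    have p2 := hp ((-1 : ℝ) • w 2 + (396/409 : ℝ) • w 3 + (13/409 : ℝ) • w 4)
    have p3 := hp ((-1 : ℝ) • w 3 + (1 : ℝ) • w 4)
    simp only [ha, hm, ha', hm'] at p0 p1 p2 p3
    simp only [hs (w 1) (w 0), hs (w 2) (w 0), hs (w 2) (w 1), hs (w 3) (w 0), hs (w 3) (w 1), hs (w 3) (w 2), hs (w 4) (w 0), hs (w 4) (w 1), hs (w 4) (w 2), hs (w 4) (w 3)] at p0 p1 p2 p3
    simp [Finset.sum_range_succ, Fin.sum_univ_four, ha, hm, ha', hm', hb']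
    simp only [hs (w 1) (w 0), hs (w 2) (w 0), hs (w 2) (w 1), hs (w 3) (w 0), hs (w 3) (w 1), hs (w 3) (w 2), hs (w 4) (w 0), hs (w 4) (w 1), hs (w 4) (w 2), hs (w 4) (w 3), d0, d1, d2, d3, d4]
    linear_combination (23/48) * p0 + (7/69) * p1 + (409/5376) * p2 + (937/19632) * p3

theorem bdf_energy_case5 (δ : ℕ → ℝ)
    (hδ : ∀ ζ : ℝ, ∑ j ∈ Finset.range (5 + 1), δ j * ζ ^ j
        = ∑ l ∈ Finset.Icc 1 (5 : ℕ), (1 / (l : ℝ)) * (1 - ζ) ^ l) :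
    ∃ η : ℝ, 0 ≤ η ∧ η < 1 ∧
    ∃ G : Matrix (Fin 5) (Fin 5) ℝ, G.IsSymm ∧ G.PosDef ∧
      ∀ (H : Type*) [AddCommGroup H] [Module ℝ H],
      ∀ B : H → H → ℝ,
        (∀ x y, B x y = B y x) →
        (∀ x y z, B (x + y) z = B x z + B y z) →
        (∀ (c : ℝ) (x y), B (c • x) y = c * B x y) →
        (∀ x, 0 ≤ B x x) →
        ∀ w : ℕ → H,
          (∑ a : Fin 5, ∑ b : Fin 5, G a b * B (w ((a : ℕ) + 1)) (w ((b : ℕ) + 1)))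
            - (∑ a : Fin 5, ∑ b : Fin 5, G a b * B (w (a : ℕ)) (w (b : ℕ)))
          ≤ B (∑ i ∈ Finset.range (5 + 1), δ i • w (5 - i)) (w 5 - η • w (5 - 1)) := by
  have e0 := hδ (0)
  have e1 := hδ (1)
  have e2 := hδ (-1)
  have e3 := hδ (2)
  have e4 := hδ (-2)
  have e5 := hδ (3)
  norm_num [Finset.sum_range_succ, Finset.sum_Icc_succ_top] at e0 e1 e2 e3 e4 e5
  have d0 : δ 0 = 137/60 := by linarith
  have d1 : δ 1 = -5 := by linarith
  have d2 : δ 2 = 5 := by linarith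
  have d3 : δ 3 = -10/3 := by linarith
  have d4 : δ 4 = 5/4 := by linarith
  have d5 : δ 5 = -1/5 := by linarith
  have hS : (!![277/360, -409/360, 403/360, -437/360, 43/90; -409/360, 353/144, -671/240, 1049/360, -73/48; 403/360, -671/240, 737/180, -329/72, 281/120; -437/360, 1049/360, -329/72, 4333/720, -27/8; 43/90, -73/48, 281/120, -27/8, 34/15] : Matrix (Fin 5) (Fin 5) ℝ).IsSymm := by
    ext i j; fin_cases i <;> fin_cases j <;> rfl
  refine ⟨5/6, by norm_num, by norm_num, _, hS, bdf_posDef_aux _ hS ?_, ?_⟩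
  · intro x
    simp [Fin.sum_univ_five]
    linear_combination (1367/1800) * sq_nonneg (1 * x 0 + (-2045/1367) * x 1 + (2015/1367) * x 2 + (-2185/1367) * x 3 + (860/1367) * x 4)
      + (3650513/4921200) * sq_nonneg (1 * x 1 + (-5517505/3650513) * x 2 + (5403180/3650513) * x 3 + (-3966925/3650513) * x 4)
      + (9722008027/13141846800) * sq_nonneg (1 * x 2 + (-14727714700/9722008027) * x 3 + (5507199515/9722008027) * x 4)
      + (26075126647733/34999228897200) * sq_nonneg (1 * x 3 + (-27418228859850/26075126647733) * x 4)
      + (891869187448271/46935227965919400) * sq_nonneg (1 * x 4)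
  · intro H _ _ B hs ha hm hp w
    have ha' : ∀ x y z, B x (y + z) = B x y + B x z := fun x y z => by
      rw [hs, ha, hs y, hs z]
    have hm' : ∀ (c : ℝ) (x y), B x (c • y) = c * B x y := fun c x y => by
      rw [hs, hm, hs y]
    have hb' : ∀ x y z, B x (y - z) = B x y - B x z := fun x y z => by
      rw [sub_eq_add_neg, ← neg_one_smul ℝ z, ha', hm']; ring
    have p0 := hp ((-1 : ℝ) • w 0 + (409/277 : ℝ) • w 1 + (-403/277 : ℝ) • w 2 + (437/277 : ℝ) • w 3 + (-202/277 : ℝ) • w 4 + (36/277 : ℝ) • w 5)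
    have p1 := hp ((-1 : ℝ) • w 1 + (1361/885 : ℝ) • w 2 + (-418/885 : ℝ) • w 3 + (-48/295 : ℝ) • w 4 + (86/885 : ℝ) • w 5)
    have p2 := hp ((-1 : ℝ) • w 2 + (2761/2492 : ℝ) • w 3 + (-228/623 : ℝ) • w 4 + (643/2492 : ℝ) • w 5)
    have p3 := hp ((-1 : ℝ) • w 3 + (4352/4967 : ℝ) • w 4 + (615/4967 : ℝ) • w 5)
    have p4 := hp ((-1 : ℝ) • w 4 + (1 : ℝ) • w 5)
    simp only [ha, hm, ha', hm'] at p0 p1 p2 p3 p4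
    simp only [hs (w 1) (w 0), hs (w 2) (w 0), hs (w 2) (w 1), hs (w 3) (w 0), hs (w 3) (w 1), hs (w 3) (w 2), hs (w 4) (w 0), hs (w 4) (w 1), hs (w 4) (w 2), hs (w 4) (w 3), hs (w 5) (w 0), hs (w 5) (w 1), hs (w 5) (w 2), hs (w 5) (w 3), hs (w 5) (w 4)] at p0 p1 p2 p3 p4
    simp [Finset.sum_range_succ, Fin.sum_univ_five, ha, hm, ha', hm', hb']
    simp only [hs (w 1) (w 0), hs (w 2) (w 0), hs (w 2) (w 1), hs (w 3) (w 0), hs (w 3) (w 1), hs (w 3) (w 2), hs (w 4) (w 0), hs (w 4) (w 1), hs (w 4) (w 2), hs (w 4) (w 3), hs (w 5) (w 0), hs (w 5) (w 1), hs (w 5) (w 2), hs (w 5) (w 3), hs (w 5) (w 4), d0, d1, d2, d3, d4, d5]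
    linear_combination (277/360) * p0 + (59/13296) * p1 + (623/159300) * p2 + (4967/1794240) * p3 + (11893/3576240) * p4


/-- **Combined Nevanlinna–Odeh multiplier / Dahlquist G-stability estimate for BDF methods.**
For `1 ≤ q ≤ 5` and the `q`-step BDF coefficients `δ_0, …, δ_q`, there exist `η ∈ [0,1)`
and a symmetric positive definite matrix `G ∈ ℝ^{q×q}` such that for every real vector
space `H` with a semi-inner product `B` and all `w_0, …, w_q ∈ H`:
`(Σ_{i=0}^q δ_i w_{q−i}, w_q − η w_{q−1})
  ≥ Σ_{i,j=1}^q g_{ij}(w_i,w_j) − Σ_{i,j=1}^q g_{ij}(w_{i−1},w_{j−1})`. -/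
theorem bdf_energy_estimate_inequality
    (q : ℕ) (hq1 : 1 ≤ q) (hq5 : q ≤ 5) (δ : ℕ → ℝ)
    (hδ : ∀ ζ : ℝ, ∑ j ∈ Finset.range (q + 1), δ j * ζ ^ j
        = ∑ l ∈ Finset.Icc 1 q, (1 / (l : ℝ)) * (1 - ζ) ^ l) :
    ∃ η : ℝ, 0 ≤ η ∧ η < 1 ∧
    ∃ G : Matrix (Fin q) (Fin q) ℝ, G.IsSymm ∧ G.PosDef ∧
      ∀ (H : Type*) [AddCommGroup H] [Module ℝ H],
      ∀ B : H → H → ℝ,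
        (∀ x y, B x y = B y x) →
        (∀ x y z, B (x + y) z = B x z + B y z) →
        (∀ (c : ℝ) (x y), B (c • x) y = c * B x y) →
        (∀ x, 0 ≤ B x x) →
        ∀ w : ℕ → H,
          (∑ a : Fin q, ∑ b : Fin q, G a b * B (w ((a : ℕ) + 1)) (w ((b : ℕ) + 1)))
            - (∑ a : Fin q, ∑ b : Fin q, G a b * B (w (a : ℕ)) (w (b : ℕ)))
          ≤ B (∑ i ∈ Finset.range (q + 1), δ i • w (q - i)) (w q - η • w (q - 1)) := by
  interval_cases q
  · exact bdf_energy_case1 δ hδ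
  · exact bdf_energy_case2 δ hδ
  · exact bdf_energy_case3 δ hδ
  · exact bdf_energy_case4 δ hδ
  · exact bdf_energy_case5 δ hδ
end
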